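/- (Ecker–Huisken local gradient estimate, graphical form; Theorem 2.1 / Theorem "localgradthm".) Let n ≥ 1, ρ > 0, t₁ ∈ ℝ, t₂ > t₁, x̂₀ ∈ ℝⁿ, and let f : [t₁,t₂) × Bⁿ(x̂₀,ρ) → ℝ be a graphical mean curvature flow. Define v(t,x) := √(1+|Df(t,x)|²). Then for every c ∈ ℝ, every t ∈ [t₁,t₂) and every x ∈ Bⁿ(x̂₀,ρ) with |x−x̂₀|² + (f(t,x)−c)² + 2n(t−t₁) < ρ², one has v(t,x)·(1 − ρ⁻²(|x−x̂₀|² + (f(t,x)−c)² + 2n(t−t₁))) ≤ sup_{y ∈ Bⁿ(x̂₀,ρ)} v(t₁,y). -/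

import Mathlib

open Metric Set MeasureTheory

/-- Partial derivative `∂ᵢ g (x)`. -/
noncomputable def pd {n : ℕ} (g : EuclideanSpace ℝ (Fin n) → ℝ) (x : EuclideanSpace ℝ (Fin n))
    (i : Fin n) : ℝ :=
  fderiv ℝ g x (EuclideanSpace.single i 1)

/-- Second partial derivative `∂ᵢ∂ⱼ g (x)`. -/
noncomputable def pd2 {n : ℕ} (g : EuclideanSpace ℝ (Fin n) → ℝ) (x : EuclideanSpace ℝ (Fin n))
    (i j : Fin n) : ℝ :=
  fderiv ℝ (fun y => pd g y j) x (EuclideanSpace.single i 1)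

/-- Squared Euclidean norm `|Dg(x)|²` of the spatial gradient. -/
noncomputable def gradNormSq {n : ℕ} (g : EuclideanSpace ℝ (Fin n) → ℝ)
    (x : EuclideanSpace ℝ (Fin n)) : ℝ :=
  ∑ i, (pd g x i) ^ 2

/-- Euclidean norm `|Dg(x)|` of the spatial gradient. -/
noncomputable def gradNorm {n : ℕ} (g : EuclideanSpace ℝ (Fin n) → ℝ)
    (x : EuclideanSpace ℝ (Fin n)) : ℝ :=
  Real.sqrt (gradNormSq g x)

/-- Frobenius norm `|D²g(x)|` of the spatial Hessian. -/
noncomputable def hessNorm {n : ℕ} (g : EuclideanSpace ℝ (Fin n) → ℝ)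
    (x : EuclideanSpace ℝ (Fin n)) : ℝ :=
  Real.sqrt (∑ i, ∑ j, (pd2 g x i j) ^ 2)

/-- Right-hand side of the graphical mean curvature flow equation:
`∑ᵢⱼ (δᵢⱼ − ∂ᵢg ∂ⱼg / (1+|Dg|²)) ∂ᵢ∂ⱼ g`. -/
noncomputable def mcfRHS {n : ℕ} (g : EuclideanSpace ℝ (Fin n) → ℝ)
    (x : EuclideanSpace ℝ (Fin n)) : ℝ :=
  ∑ i, ∑ j,
    ((if i = j then (1 : ℝ) else 0) - pd g x i * pd g x j / (1 + gradNormSq g x)) * pd2 g x i j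

/-- `f` is a (smooth) graphical mean curvature flow on `I × U`. -/
def IsGMCF {n : ℕ} (I : Set ℝ) (U : Set (EuclideanSpace ℝ (Fin n)))
    (f : ℝ → EuclideanSpace ℝ (Fin n) → ℝ) : Prop :=
  ContDiffOn ℝ (⊤ : ℕ∞) (fun p : ℝ × EuclideanSpace ℝ (Fin n) => f p.1 p.2) (I ×ˢ U) ∧
  ∀ t ∈ I, ∀ x ∈ U, deriv (fun s => f s x) t = mcfRHS (f t) x

/-- Squared norm `|A|²(g,x)` of the second fundamental form of the graph of `g`
at `(x, g(x))`. -/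
noncomputable def secondFF2 {n : ℕ} (g : EuclideanSpace ℝ (Fin n) → ℝ)
    (x : EuclideanSpace ℝ (Fin n)) : ℝ :=
  ∑ i, ∑ j, ∑ k, ∑ l,
    ((if i = k then (1 : ℝ) else 0) - pd g x i * pd g x k / (1 + gradNormSq g x)) *
      ((if j = l then (1 : ℝ) else 0) - pd g x j * pd g x l / (1 + gradNormSq g x)) *
      (pd2 g x i j / Real.sqrt (1 + gradNormSq g x)) *
      (pd2 g x k l / Real.sqrt (1 + gradNormSq g x))

open scoped ContDiff Topology
open Filter

/-- Algebraic square root of the inverse metric. -/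
lemma exists_frame {n : ℕ} (p : Fin n → ℝ) :
    ∃ B : Fin n → Fin n → ℝ, ∀ i j, ∑ m, B m i * B m j =
      (if i = j then (1 : ℝ) else 0) - p i * p j / (1 + ∑ l, p l ^ 2) := by
  set S := ∑ l, p l ^ 2 with hS
  have hS0 : 0 ≤ S := Finset.sum_nonneg fun l _ => sq_nonneg _
  obtain ⟨v, hv, hv2⟩ : ∃ v : ℝ, 0 < v ∧ v ^ 2 = 1 + S :=
    ⟨Real.sqrt (1 + S), Real.sqrt_pos.2 (by linarith), Real.sq_sqrt (by linarith)⟩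
  set lam := 1 / (v * (v + 1)) with hlam
  refine ⟨fun m i => (if m = i then (1 : ℝ) else 0) - lam * p m * p i, fun i j => ?_⟩
  have h1 : ∀ m, ((if m = i then (1 : ℝ) else 0) - lam * p m * p i) *
      ((if m = j then (1 : ℝ) else 0) - lam * p m * p j) =
      (if m = i then (if m = j then (1 : ℝ) else 0) else 0)
      - (if m = i then lam * p m * p j else 0) - (if m = j then lam * p m * p i else 0)
      + lam ^ 2 * p i * p j * p m ^ 2 := by
    intro m; split_ifs <;> ring
  simp only [h1, Finset.sum_add_distrib, Finset.sum_sub_distrib, Finset.sum_ite_eq',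
    Finset.mem_univ, if_true, ← Finset.mul_sum, ← hS]
  have h2 : 2 * lam - lam ^ 2 * S = 1 / (1 + S) := by
    have : S = v ^ 2 - 1 := by linarith
    rw [this, hlam]
    have : (0:ℝ) < v + 1 := by linarith
    field_simp
    ring_nf
  rw [div_eq_mul_one_div, ← h2]
  ring

lemma second_deriv_test (g g1 : ℝ → ℝ) (g2 : ℝ) (h1 : ∀ᶠ r in 𝓝 (0:ℝ), HasDerivAt g (g1 r) r)
    (h2 : HasDerivAt g1 g2 0) (hm : IsLocalMax g 0) : g1 0 = 0 ∧ g2 ≤ 0 := by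
  have hd : g1 0 = 0 := hm.hasDerivAt_eq_zero h1.self_of_nhds
  refine ⟨hd, ?_⟩
  by_contra hc
  push Not at hc
  have e1 : deriv g =ᶠ[𝓝 0] g1 := h1.mono fun r hr => hr.deriv
  have e2 : deriv (deriv g) 0 = g2 := by rw [e1.deriv_eq, h2.deriv]
  have hmin : IsLocalMin g 0 := by
    apply isLocalMin_of_deriv_deriv_pos
    · rw [e2]; exact hc
    · rw [e1.self_of_nhds, hd]
    · exact h1.self_of_nhds.continuousAt
  have hconst : g =ᶠ[𝓝 0] fun _ => g 0 := by
    filter_upwards [hm, hmin] with r a b using le_antisymm a b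
  have e3 : deriv g =ᶠ[𝓝 0] fun _ => 0 := by
    have := hconst.deriv
    simpa using this
  rw [e3.deriv_eq] at e2
  simp at e2
  linarith

lemma line_test {n : ℕ} (P Q : Fin n → ℝ → ℝ) (S : Fin n → ℝ) (φ φ1 : ℝ → ℝ) (φ2 : ℝ)
    (hP : ∀ l, ∀ᶠ r in 𝓝 (0:ℝ), HasDerivAt (P l) (Q l r) r)
    (hQ : ∀ l, HasDerivAt (Q l) (S l) 0)
    (hφ : ∀ᶠ r in 𝓝 (0:ℝ), HasDerivAt φ (φ1 r) r) (hφ1 : HasDerivAt φ1 φ2 0)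
    (hpos : 0 < φ 0)
    (hm : IsLocalMax (fun r => (1 + ∑ l, P l r ^ 2) * φ r ^ 2) 0) :
    (2 * ∑ l, P l 0 * Q l 0) * φ 0 + 2 * (1 + ∑ l, P l 0 ^ 2) * φ1 0 = 0 ∧
    (2 * ∑ l, Q l 0 ^ 2 + 2 * ∑ l, P l 0 * S l) * φ 0 ^ 2
      + 4 * (2 * ∑ l, P l 0 * Q l 0) * φ 0 * φ1 0
      + 2 * (1 + ∑ l, P l 0 ^ 2) * φ1 0 ^ 2
      + 2 * (1 + ∑ l, P l 0 ^ 2) * φ 0 * φ2 ≤ 0 := by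
  have hP' : ∀ᶠ r in 𝓝 (0:ℝ), ∀ l, HasDerivAt (P l) (Q l r) r := eventually_all.2 hP
  have hV : ∀ r, (∀ l, HasDerivAt (P l) (Q l r) r) →
      HasDerivAt (fun r => 1 + ∑ l, P l r ^ 2) (2 * ∑ l, P l r * Q l r) r := by
    intro r hr
    have := (HasDerivAt.fun_sum (u := Finset.univ) (fun l _ => (hr l).fun_pow 2)).const_add 1
    refine this.congr_deriv ?_
    rw [Finset.mul_sum]
    refine Finset.sum_congr rfl fun l _ => ?_
    simp; ring
  have hV1 : HasDerivAt (fun r => 2 * ∑ l, P l r * Q l r)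
      (2 * ∑ l, Q l 0 ^ 2 + 2 * ∑ l, P l 0 * S l) 0 := by
    have := (HasDerivAt.fun_sum (u := Finset.univ)
      (fun l _ => (hP'.self_of_nhds l).fun_mul (hQ l))).const_mul 2
    refine this.congr_deriv ?_
    rw [Finset.sum_add_distrib, mul_add]
    congr 3
    ext l; ring
  have key := second_deriv_test _
    (fun r => (2 * ∑ l, P l r * Q l r) * φ r ^ 2 + (1 + ∑ l, P l r ^ 2) * (2 * φ r * φ1 r)) _
    (by
      filter_upwards [hP', hφ] with r h1 h2
      have := (hV r h1).fun_mul (h2.fun_pow 2)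
      refine this.congr_deriv ?_
      simp)
    ((hV1.fun_mul (hφ.self_of_nhds.fun_pow 2)).fun_add ((hV 0 hP'.self_of_nhds).fun_mul
      ((hφ.self_of_nhds.const_mul 2).fun_mul hφ1))) hm
  obtain ⟨k1, k2⟩ := key
  constructor
  · have : φ 0 * ((2 * ∑ l, P l 0 * Q l 0) * φ 0 + 2 * (1 + ∑ l, P l 0 ^ 2) * φ1 0) = 0 := by
      refine Eq.trans ?_ k1; ring
    exact (mul_eq_zero.1 this).resolve_left hpos.ne'
  · refine le_trans (le_of_eq ?_) k2
    simp
    ring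

/-- The pointwise computation of the maximum principle. -/
lemma pointwise {n : ℕ} (p r : Fin n → ℝ) (h : Fin n → Fin n → ℝ)
    (t : Fin n → Fin n → Fin n → ℝ) (τ d φ : ℝ) (B : Fin n → Fin n → ℝ)
    (V : ℝ) (hV : V = 1 + ∑ l, p l ^ 2)
    (hB : ∀ i j, ∑ m, B m i * B m j = (if i = j then (1 : ℝ) else 0) - p i * p j / V)
    (hφ : 0 < φ) (hsymm : ∀ i j, h i j = h j i)
    (hpde : V * τ = V * ∑ i, h i i - ∑ i, ∑ j, p i * p j * h i j)
    (hpde' : ∀ k, (2 * ∑ l, p l * h k l) * τ + V * r k =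
      (2 * ∑ l, p l * h k l) * ∑ i, h i i + V * ∑ i, t k i i
      - ∑ i, ∑ j, (h k i * p j * h i j + p i * h k j * h i j + p i * p j * t k i j))
    (φ1 φ2 : Fin n → ℝ)
    (hφ1 : ∀ m, (2 * ∑ l, p l * ∑ i, B m i * h i l) * φ + 2 * V * φ1 m = 0)
    (hφ2 : ∀ m, φ2 m = - 2 * ∑ i, B m i ^ 2 - 2 * (∑ i, B m i * p i) ^ 2
      - 2 * d * ∑ i, ∑ j, B m i * B m j * h i j)
    (hW : ∀ m, (2 * ∑ l, (∑ i, B m i * h i l) ^ 2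
        + 2 * ∑ l, p l * ∑ i, ∑ j, B m i * B m j * t l i j) * φ ^ 2
      + 4 * (2 * ∑ l, p l * ∑ i, B m i * h i l) * φ * φ1 m
      + 2 * V * φ1 m ^ 2 + 2 * V * φ * φ2 m ≤ 0) :
    (2 * ∑ l, p l * r l) * φ ^ 2 + V * (2 * φ * (-2 * d * τ - 2 * n)) ≤ 0 := by
  have hS0 : 0 ≤ ∑ l, p l ^ 2 := Finset.sum_nonneg fun l _ => sq_nonneg _
  have hV0 : 0 < V := by linarith
  -- contraction with the inverse metric
  have hcon : ∀ X : Fin n → Fin n → ℝ, ∑ m, ∑ i, ∑ j, B m i * B m j * X i j =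
      ∑ i, X i i - (∑ i, ∑ j, p i * p j * X i j) / V := by
    intro X
    rw [Finset.sum_comm]
    have : ∀ i, ∑ m, ∑ j, B m i * B m j * X i j =
        X i i - (∑ j, p i * p j * X i j) / V := by
      intro i
      rw [Finset.sum_comm]
      simp only [← Finset.sum_mul, hB, sub_mul, Finset.sum_sub_distrib, ite_mul, one_mul, zero_mul,
        Finset.sum_ite_eq, Finset.mem_univ, if_true, Finset.sum_div]
      congr 1
      refine Finset.sum_congr rfl fun j _ => by ring
    simp only [this, Finset.sum_sub_distrib, Finset.sum_div]
  set q : Fin n → ℝ := fun k => ∑ l, p l * h k l with hq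
  have hbq : ∀ m, ∑ l, p l * ∑ i, B m i * h i l = ∑ i, B m i * q i := by
    intro m
    simp only [hq, Finset.mul_sum]
    rw [Finset.sum_comm]
    refine Finset.sum_congr rfl fun i _ => Finset.sum_congr rfl fun j _ => by ring
  have hsq : ∀ x : Fin n → ℝ, ∑ m, (∑ i, B m i * x i) ^ 2 =
      ∑ i, x i ^ 2 - (∑ i, p i * x i) ^ 2 / V := by
    intro x
    have := hcon fun i j => x i * x j
    have e : ∀ y : Fin n → ℝ, (∑ i, y i * x i) ^ 2 = ∑ i, ∑ j, y i * y j * (x i * x j) := by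
      intro y
      rw [sq, Finset.sum_mul_sum]
      refine Finset.sum_congr rfl fun i _ => Finset.sum_congr rfl fun j _ => by ring
    simp only [e, this]
    simp only [sq]
  set A := ∑ m, (∑ i, B m i * q i) ^ 2 with hA
  -- Cauchy-Schwarz
  have hCS : A ≤ V * ∑ m, ∑ l, (∑ i, B m i * h i l) ^ 2 := by
    rw [hA, Finset.mul_sum]
    refine Finset.sum_le_sum fun m _ => ?_
    rw [← hbq]
    refine (Finset.sum_mul_sq_le_sq_mul_sq _ _ _).trans ?_
    refine mul_le_mul_of_nonneg_right (by linarith) (Finset.sum_nonneg fun l _ => sq_nonneg _)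
  -- sum of φ2
  have hpq : ∑ i, ∑ j, p i * p j * h i j = ∑ i, p i * q i := by
    simp only [hq, Finset.mul_sum]
    refine Finset.sum_congr rfl fun i _ => Finset.sum_congr rfl fun j _ => by ring
  have hτ : τ = ∑ i, h i i - (∑ i, p i * q i) / V := by
    rw [hpq] at hpde
    field_simp
    linarith
  have hφ2s : ∑ m, φ2 m = -2 * d * τ - 2 * n := by
    simp only [hφ2, Finset.sum_sub_distrib, ← Finset.mul_sum, hcon, hsq, hpq, ← hτ]
    have e1 : ∑ m, ∑ i, B m i ^ 2 = n - (∑ i, p i ^ 2) / V := by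
      rw [Finset.sum_comm]
      have : ∀ i, ∑ m, B m i ^ 2 = 1 - p i ^ 2 / V := by
        intro i
        have := hB i i
        simp only [if_true, ← sq] at this
        exact this
      simp [this, Finset.sum_sub_distrib, Finset.sum_div]
    have e2 : ∑ i, p i * p i = V - 1 := by rw [hV]; simp [sq]
    rw [e1]
    simp only [sq, e2]
    field_simp
    ring
  -- time derivative of V
  have hVt : V * ∑ l, p l * r l =
      V * (∑ m, ∑ l, p l * ∑ i, ∑ j, B m i * B m j * t l i j) - 2 * A := by
    have hk : ∀ k, V * r k = V * (∑ i, t k i i - (∑ i, ∑ j, p i * p j * t k i j) / V)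
        - 2 * ∑ i, h k i * q i + 2 * q k * (∑ i, p i * q i) / V := by
      intro k
      have := hpde' k
      have e1 : ∑ i, ∑ j, (h k i * p j * h i j + p i * h k j * h i j + p i * p j * t k i j)
          = 2 * ∑ i, h k i * q i + ∑ i, ∑ j, p i * p j * t k i j := by
        simp only [Finset.sum_add_distrib]
        have a1 : ∑ i, ∑ j, h k i * p j * h i j = ∑ i, h k i * q i := by
          simp only [hq, Finset.mul_sum]
          refine Finset.sum_congr rfl fun i _ => Finset.sum_congr rfl fun j _ => by ring
        have a2 : ∑ i, ∑ j, p i * h k j * h i j = ∑ i, h k i * q i := by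
          rw [Finset.sum_comm]
          simp only [hq, Finset.mul_sum]
          refine Finset.sum_congr rfl fun i _ => Finset.sum_congr rfl fun j _ => ?_
          rw [hsymm i j]; ring
        rw [a1, a2]; ring
      rw [e1, hτ] at this
      have e2 : ∑ l, p l * h k l = q k := rfl
      rw [e2] at this
      have hne := hV0.ne'
      field_simp
      field_simp at this
      linarith
    have e3 : ∑ m, ∑ l, p l * ∑ i, ∑ j, B m i * B m j * t l i j =
        ∑ l, p l * (∑ i, t l i i - (∑ i, ∑ j, p i * p j * t l i j) / V) := by
      rw [Finset.sum_comm]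
      simp only [← Finset.mul_sum, hcon]
    have e4 : ∑ k, p k * ∑ i, h k i * q i = ∑ i, q i ^ 2 := by
      simp only [Finset.mul_sum]
      rw [Finset.sum_comm]
      refine Finset.sum_congr rfl fun i _ => ?_
      rw [sq]
      conv_rhs => rw [show q i = ∑ l, p l * h i l from rfl]
      rw [Finset.sum_mul]
      refine Finset.sum_congr rfl fun k _ => ?_
      rw [hsymm k i]
      simp only [hq]; ring
    rw [e3, hA, hsq, Finset.mul_sum]
    have e5 : ∀ k, V * (p k * r k) =
        V * (p k * (∑ i, t k i i - (∑ i, ∑ j, p i * p j * t k i j) / V))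
        - 2 * (p k * ∑ i, h k i * q i) + (p k * q k) * (2 * (∑ i, p i * q i) / V) := by
      intro k
      rw [show V * (p k * r k) = p k * (V * r k) by ring, hk]; ring
    simp only [e5, Finset.sum_add_distrib, Finset.sum_sub_distrib, ← Finset.mul_sum,
      ← Finset.sum_mul, e4]
    ring
  -- combine
  have hφ1' : ∀ m, φ1 m = -(∑ i, B m i * q i) * φ / V := by
    intro m
    have := hφ1 m
    rw [hbq] at this
    field_simp
    linarith
  have hsum := Finset.sum_nonpos fun m (_ : m ∈ Finset.univ) => hW m
  have hW' : ∀ m, (2 * ∑ l, (∑ i, B m i * h i l) ^ 2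
        + 2 * ∑ l, p l * ∑ i, ∑ j, B m i * B m j * t l i j) * φ ^ 2
      + 4 * (2 * ∑ l, p l * ∑ i, B m i * h i l) * φ * φ1 m
      + 2 * V * φ1 m ^ 2 + 2 * V * φ * φ2 m =
      2 * φ ^ 2 * ∑ l, (∑ i, B m i * h i l) ^ 2 +
      2 * φ ^ 2 * ∑ l, p l * ∑ i, ∑ j, B m i * B m j * t l i j
      - 6 * φ ^ 2 / V * (∑ i, B m i * q i) ^ 2 + 2 * V * φ * φ2 m := by
    intro m
    rw [hbq, hφ1']
    field_simp
    ring
  simp only [hW', Finset.sum_add_distrib, Finset.sum_sub_distrib, ← Finset.mul_sum] at hsum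
  rw [← hA, hφ2s] at hsum
  have hVt' : ∑ l, p l * r l =
      (∑ m, ∑ l, p l * ∑ i, ∑ j, B m i * B m j * t l i j) - 2 * A / V := by
    field_simp
    linarith
  have hCS' : A / V ≤ ∑ m, ∑ l, (∑ i, B m i * h i l) ^ 2 := by
    rw [div_le_iff₀ hV0]; linarith
  have hCS2 := mul_le_mul_of_nonneg_left hCS' (sq_nonneg φ)
  rw [hVt']
  have e : 6 * φ ^ 2 / V * A = 6 * (φ ^ 2 * (A / V)) := by ring
  rw [e] at hsum
  have e' : (2 * (∑ m, ∑ l, p l * ∑ i, ∑ j, B m i * B m j * t l i j - 2 * A / V)) * φ ^ 2 =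
    2 * φ ^ 2 * (∑ m, ∑ l, p l * ∑ i, ∑ j, B m i * B m j * t l i j) - 4 * (φ ^ 2 * (A / V)) := by
    ring
  rw [e']
  linarith

/-- Directional derivative. -/
noncomputable def DD {X : Type*} [NormedAddCommGroup X] [NormedSpace ℝ X] (u : X) (G : X → ℝ)
    (q : X) : ℝ := fderiv ℝ G q u

section DDsec
variable {X : Type*} [NormedAddCommGroup X] [NormedSpace ℝ X]

lemma DD_smooth {Ω : Set X} (hΩ : IsOpen Ω) {G : X → ℝ} (hG : ContDiffOn ℝ ∞ G Ω) (u : X) :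
    ContDiffOn ℝ ∞ (DD u G) Ω :=
  (hG.fderiv_of_isOpen hΩ (m := ∞) (by simp)).clm_apply contDiffOn_const

lemma smooth_diff {Ω : Set X} (hΩ : IsOpen Ω) {G : X → ℝ} (hG : ContDiffOn ℝ ∞ G Ω) {q : X}
    (hq : q ∈ Ω) : DifferentiableAt ℝ G q :=
  (hG.contDiffAt (hΩ.mem_nhds hq)).differentiableAt (by simp)

lemma DD_line {Ω : Set X} (hΩ : IsOpen Ω) {G : X → ℝ} (hG : ContDiffOn ℝ ∞ G Ω) {q u : X} {r : ℝ}
    (hq : q + r • u ∈ Ω) : HasDerivAt (fun r : ℝ => G (q + r • u)) (DD u G (q + r • u)) r := by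
  have h1 : HasDerivAt (fun r : ℝ => q + r • u) u r := by
    simpa using ((hasDerivAt_id r).smul_const u).const_add q
  exact (smooth_diff hΩ hG hq).hasFDerivAt.comp_hasDerivAt r h1

lemma DD_comm {Ω : Set X} (hΩ : IsOpen Ω) {G : X → ℝ} (hG : ContDiffOn ℝ ∞ G Ω) {q : X}
    (hq : q ∈ Ω) (u w : X) : DD u (DD w G) q = DD w (DD u G) q := by
  have hs : IsSymmSndFDerivAt ℝ G q :=
    (hG.contDiffAt (hΩ.mem_nhds hq)).isSymmSndFDerivAt
      (by simp only [minSmoothness_of_isRCLikeNormedField]; 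
          exact WithTop.coe_le_coe.2 le_top)
  have hd : DifferentiableAt ℝ (fderiv ℝ G) q :=
    ((hG.fderiv_of_isOpen hΩ (m := ∞) (by simp)).contDiffAt (hΩ.mem_nhds hq)).differentiableAt
      (by simp)
  have e : ∀ u w : X, DD u (DD w G) q = fderiv ℝ (fderiv ℝ G) q u w := by
    intro u w
    have : HasFDerivAt (DD w G) _ q := hd.hasFDerivAt.clm_apply (hasFDerivAt_const w q)
    unfold DD at this ⊢
    rw [this.fderiv]
    simp
  rw [e, e]
  exact hs u w

lemma DD_congr {Ω : Set X} (hΩ : IsOpen Ω) {G H : X → ℝ} (h : ∀ q ∈ Ω, G q = H q) {q : X}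
    (hq : q ∈ Ω) (u : X) : DD u G q = DD u H q := by
  have : G =ᶠ[𝓝 q] H := by filter_upwards [hΩ.mem_nhds hq] with x hx using h x hx
  unfold DD
  rw [this.fderiv_eq]

lemma DD_lin {ι : Type*} [Fintype ι] (ε : ι → X) (b : ι → ℝ) (G : X → ℝ) (q : X) :
    DD (∑ i, b i • ε i) G q = ∑ i, b i * DD (ε i) G q := by
  simp [DD]

lemma DD_lin2 {Ω : Set X} (hΩ : IsOpen Ω) {G : X → ℝ} (hG : ContDiffOn ℝ ∞ G Ω) {q : X}
    (hq : q ∈ Ω) {ι : Type*} [Fintype ι] (ε : ι → X) (b : ι → ℝ) :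
    DD (∑ i, b i • ε i) (DD (∑ i, b i • ε i) G) q =
      ∑ i, ∑ j, b i * b j * DD (ε i) (DD (ε j) G) q := by
  rw [DD_lin]
  refine Finset.sum_congr rfl fun i _ => ?_
  rw [DD_comm hΩ hG hq, DD_lin, Finset.mul_sum]
  refine Finset.sum_congr rfl fun j _ => ?_
  rw [DD_comm hΩ hG hq]; ring

lemma DD_swap3 {Ω : Set X} (hΩ : IsOpen Ω) {G : X → ℝ} (hG : ContDiffOn ℝ ∞ G Ω) {q : X}
    (hq : q ∈ Ω) (u w z : X) : DD u (DD w (DD z G)) q = DD z (DD u (DD w G)) q := by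
  rw [DD_congr hΩ (fun x hx => DD_comm hΩ hG hx w z) hq,
    DD_comm hΩ (DD_smooth hΩ hG w) hq]

/-- The equation, differentiated once. -/
lemma pde_diff {n : ℕ} {Ω : Set X} (hΩ : IsOpen Ω) {G : X → ℝ} (hG : ContDiffOn ℝ ∞ G Ω) {q : X}
    (hq : q ∈ Ω) (τ : X) (ε : Fin n → X)
    (hpde : ∀ q ∈ Ω, (1 + ∑ l, DD (ε l) G q ^ 2) * DD τ G q =
      (1 + ∑ l, DD (ε l) G q ^ 2) * ∑ i, DD (ε i) (DD (ε i) G) q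
      - ∑ i, ∑ j, DD (ε i) G q * DD (ε j) G q * DD (ε i) (DD (ε j) G) q) (k : Fin n) :
    (2 * ∑ l, DD (ε l) G q * DD (ε k) (DD (ε l) G) q) * DD τ G q
      + (1 + ∑ l, DD (ε l) G q ^ 2) * DD (ε k) (DD τ G) q =
    (2 * ∑ l, DD (ε l) G q * DD (ε k) (DD (ε l) G) q) * ∑ i, DD (ε i) (DD (ε i) G) q
      + (1 + ∑ l, DD (ε l) G q ^ 2) * ∑ i, DD (ε k) (DD (ε i) (DD (ε i) G)) q
      - ∑ i, ∑ j, (DD (ε k) (DD (ε i) G) q * DD (ε j) G q * DD (ε i) (DD (ε j) G) q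
        + DD (ε i) G q * DD (ε k) (DD (ε j) G) q * DD (ε i) (DD (ε j) G) q
        + DD (ε i) G q * DD (ε j) G q * DD (ε k) (DD (ε i) (DD (ε j) G)) q) := by
  set γ : ℝ → X := fun r => q + r • ε k with hγ
  have hγ0 : γ 0 = q := by simp [hγ]
  have hev : ∀ᶠ r in 𝓝 (0:ℝ), γ r ∈ Ω := by
    have hc : Continuous γ := by fun_prop
    exact hc.continuousAt.eventually (hΩ.mem_nhds (by rw [hγ0]; exact hq))
  have hd : ∀ H : X → ℝ, ContDiffOn ℝ ∞ H Ω →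
      HasDerivAt (fun r => H (γ r)) (DD (ε k) H q) 0 := by
    intro H hH
    have := DD_line hΩ hH (q := q) (u := ε k) (r := 0) (by simpa using hq)
    simpa using this
  have s1 : ∀ i, ContDiffOn ℝ ∞ (DD (ε i) G) Ω := fun i => DD_smooth hΩ hG _
  have s2 : ∀ i j, ContDiffOn ℝ ∞ (DD (ε i) (DD (ε j) G)) Ω := fun i j => DD_smooth hΩ (s1 j) _
  have hV : HasDerivAt (fun r => 1 + ∑ l, DD (ε l) G (γ r) ^ 2)
      (2 * ∑ l, DD (ε l) G q * DD (ε k) (DD (ε l) G) q) 0 := by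
    have := (HasDerivAt.fun_sum (u := Finset.univ)
      (fun l _ => (hd _ (s1 l)).fun_pow 2)).const_add 1
    refine this.congr_deriv ?_
    rw [Finset.mul_sum]
    refine Finset.sum_congr rfl fun l _ => ?_
    simp [hγ0]; ring
  have hL := hV.fun_mul (hd _ (DD_smooth hΩ hG τ))
  have hR := (hV.fun_mul (HasDerivAt.fun_sum (u := Finset.univ)
      (fun i _ => hd _ (s2 i i)))).fun_sub
    (HasDerivAt.fun_sum (u := Finset.univ) (fun i _ => HasDerivAt.fun_sum (u := Finset.univ)
      (fun j _ => ((hd _ (s1 i)).fun_mul (hd _ (s1 j))).fun_mul (hd _ (s2 i j)))))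
  have heq := hL.congr_of_eventuallyEq (f₁ := _) (hev.mono fun r hr => (hpde _ hr).symm)
  have := heq.unique hR
  simp only [hγ0] at this
  rw [this]
  congr 1
  refine Finset.sum_congr rfl fun i _ => Finset.sum_congr rfl fun j _ => ?_
  ring

end DDsec

lemma deriv_nonneg_of_left_max (g : ℝ → ℝ) (g' s : ℝ) (h : HasDerivAt g g' s)
    (hm : ∀ᶠ r in 𝓝[<] s, g r ≤ g s) : 0 ≤ g' := by
  have h1 := (hasDerivAt_iff_tendsto_slope_left_right.1 h).1
  refine ge_of_tendsto h1 ?_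
  filter_upwards [hm, self_mem_nhdsWithin] with r hr hr2
  rw [slope_def_field]
  have : r - s < 0 := by simpa using hr2
  exact div_nonneg_of_nonpos (by linarith) this.le

/-- At an interior maximum the time derivative is nonpositive. -/
lemma interior_max {n : ℕ} {Ω : Set (ℝ × EuclideanSpace ℝ (Fin n))} (hΩ : IsOpen Ω)
    {F : ℝ × EuclideanSpace ℝ (Fin n) → ℝ} (hF : ContDiffOn ℝ ∞ F Ω)
    (ε : Fin n → ℝ × EuclideanSpace ℝ (Fin n)) (hε : ∀ i, ε i = (0, EuclideanSpace.single i 1))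
    (hpde : ∀ q ∈ Ω, DD (1, 0) F q =
      ∑ i, ∑ j, ((if i = j then (1 : ℝ) else 0) - DD (ε i) F q * DD (ε j) F q /
        (1 + ∑ l, DD (ε l) F q ^ 2)) * DD (ε i) (DD (ε j) F) q)
    (R c t₁ : ℝ) (x₀ : EuclideanSpace ℝ (Fin n)) (s : ℝ) (y : EuclideanSpace ℝ (Fin n))
    (hq : (s, y) ∈ Ω)
    (φ : ℝ × EuclideanSpace ℝ (Fin n) → ℝ)
    (hφ : φ = fun q => R - (dist q.2 x₀ ^ 2 + (F q - c) ^ 2 + 2 * n * (q.1 - t₁)))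
    (hpos : 0 < φ (s, y))
    (hm : IsLocalMax (fun z => (1 + ∑ l, DD (ε l) F (s, z) ^ 2) * φ (s, z) ^ 2) y) :
    ∃ w ≤ 0, HasDerivAt (fun r => (1 + ∑ l, DD (ε l) F (r, y) ^ 2) * φ (r, y) ^ 2) w s := by
  set q : ℝ × EuclideanSpace ℝ (Fin n) := (s, y) with hqdef
  have s1 : ∀ i, ContDiffOn ℝ ∞ (DD (ε i) F) Ω := fun i => DD_smooth hΩ hF _
  have hpde2 : ∀ q ∈ Ω, (1 + ∑ l, DD (ε l) F q ^ 2) * DD (1, 0) F q =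
      (1 + ∑ l, DD (ε l) F q ^ 2) * ∑ i, DD (ε i) (DD (ε i) F) q
      - ∑ i, ∑ j, DD (ε i) F q * DD (ε j) F q * DD (ε i) (DD (ε j) F) q := by
    intro q hq
    have hV : 0 < 1 + ∑ l, DD (ε l) F q ^ 2 := by
      have : 0 ≤ ∑ l, DD (ε l) F q ^ 2 := Finset.sum_nonneg fun l _ => sq_nonneg _
      linarith
    rw [hpde q hq]
    simp only [sub_mul, Finset.sum_sub_distrib, ite_mul, one_mul, zero_mul,
      Finset.sum_ite_eq, Finset.mem_univ, if_true, mul_sub]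
    congr 1
    simp only [Finset.mul_sum]
    refine Finset.sum_congr rfl fun i _ => Finset.sum_congr rfl fun j _ => ?_
    field_simp
  obtain ⟨B, hB⟩ := exists_frame fun i => DD (ε i) F q
  -- frame directions
  set b : Fin n → EuclideanSpace ℝ (Fin n) := fun m => WithLp.toLp 2 (B m) with hb
  have hβ : ∀ m, ((0 : ℝ), b m) = ∑ i, B m i • ε i := by
    intro m
    ext k
    · simp [hε, Prod.fst_sum]
    · simp [hε, Prod.snd_sum, hb, Finset.sum_apply, Pi.single_apply]
  set φ1 : Fin n → ℝ → ℝ := fun m (r : ℝ) => - (2 * inner ℝ (y - x₀ + r • b m) (b m))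
      - 2 * (F (q + r • (0, b m)) - c) * DD (0, b m) F (q + r • (0, b m)) with hφ1
  set φ2 : Fin n → ℝ := fun m => - 2 * ∑ i, B m i ^ 2 - 2 * (∑ i, B m i * DD (ε i) F q) ^ 2
      - 2 * (F q - c) * ∑ i, ∑ j, B m i * B m j * DD (ε i) (DD (ε j) F) q with hφ2
  have hev : ∀ m, ∀ᶠ r in 𝓝 (0:ℝ), q + r • ((0 : ℝ), b m) ∈ Ω := by
    intro m
    have hc : Continuous fun r : ℝ => q + r • ((0 : ℝ), b m) := by fun_prop
    exact hc.continuousAt.eventually (hΩ.mem_nhds (by simpa using hq))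
  have hline : ∀ m (r : ℝ), q + r • ((0 : ℝ), b m) = (s, y + r • b m) := by
    intro m r; simp [hqdef]
  have hinner : ∀ m (r : ℝ), HasDerivAt (fun r : ℝ => y - x₀ + r • b m) (b m) r := by
    intro m r
    simpa using ((hasDerivAt_id r).smul_const (b m)).const_add (y - x₀)
  have hφd : ∀ m, ∀ᶠ r in 𝓝 (0:ℝ),
      HasDerivAt (fun r : ℝ => φ (q + r • (0, b m))) (φ1 m r) r := by
    intro m
    filter_upwards [hev m] with r hr
    have h1 := (hinner m r).norm_sq
    have h2 := ((DD_line hΩ hF hr).sub_const c).fun_pow 2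
    have h3 := ((h1.fun_add h2).add_const (2 * n * (s - t₁))).const_sub R
    refine (h3.congr_deriv ?_).congr_of_eventuallyEq (Eventually.of_forall fun r => ?_)
    · simp [hφ1]; ring
    · simp only [hφ, hline, dist_eq_norm]
      rw [show y + r • b m - x₀ = y - x₀ + r • b m by abel]
  have hφ1d : ∀ m, HasDerivAt (φ1 m) (φ2 m) 0 := by
    intro m
    have h0 : q + (0:ℝ) • ((0:ℝ), b m) ∈ Ω := by simpa using hq
    have h1 := (((hinner m 0).inner ℝ (hasDerivAt_const (0:ℝ) (b m))).const_mul 2).fun_neg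
    have h2 := (((DD_line hΩ hF h0).sub_const c).const_mul 2).fun_mul
      (DD_line hΩ (DD_smooth hΩ hF (0, b m)) h0)
    refine (h1.fun_sub h2).congr_deriv ?_
    have e1 : inner ℝ (b m) (b m) = ∑ i, B m i ^ 2 := by
      rw [real_inner_self_eq_norm_sq, EuclideanSpace.norm_sq_eq]
      simp [hb]
    simp only [zero_smul, add_zero, inner_zero_right, zero_add, e1]
    rw [hβ m, DD_lin, DD_lin2 hΩ hF hq]
    simp only [hφ2]; ring
  have hlt : ∀ m, _ := fun m => line_test
    (fun l r => DD (ε l) F (q + r • (0, b m)))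
    (fun l r => DD (0, b m) (DD (ε l) F) (q + r • (0, b m)))
    (fun l => DD (0, b m) (DD (0, b m) (DD (ε l) F)) q)
    (fun r : ℝ => φ (q + r • (0, b m))) (φ1 m) (φ2 m)
    (fun l => (hev m).mono fun r hr => DD_line hΩ (s1 l) hr)
    (fun l => by
      have := DD_line hΩ (DD_smooth hΩ (s1 l) (0, b m)) (q := q) (u := (0, b m)) (r := 0)
        (by simpa using hq)
      simpa using this)
    (hφd m) (hφ1d m) (by simpa using hpos)
    (by
      have hc : ContinuousAt (fun r : ℝ => y + r • b m) 0 := by fun_prop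
      have := hc.eventually (p := fun z => (1 + ∑ l, DD (ε l) F (s, z) ^ 2) * φ (s, z) ^ 2 ≤
        (1 + ∑ l, DD (ε l) F (s, y) ^ 2) * φ (s, y) ^ 2)
        (by simp only [zero_smul, add_zero]; exact hm)
      filter_upwards [this] with r hr
      simp only [hline]
      simpa using hr)
  simp only [zero_smul, add_zero] at hlt
  have hβ1 : ∀ m l, DD (0, b m) (DD (ε l) F) q = ∑ i, B m i * DD (ε i) (DD (ε l) F) q := by
    intro m l; rw [hβ m, DD_lin]
  have hβ2 : ∀ m l, DD (0, b m) (DD (0, b m) (DD (ε l) F)) q =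
      ∑ i, ∑ j, B m i * B m j * DD (ε l) (DD (ε i) (DD (ε j) F)) q := by
    intro m l
    rw [hβ m, DD_lin2 hΩ (s1 l) hq]
    refine Finset.sum_congr rfl fun i _ => Finset.sum_congr rfl fun j _ => ?_
    rw [DD_swap3 hΩ hF hq]
  simp only [hβ1, hβ2] at hlt
  have key := pointwise (fun i => DD (ε i) F q) (fun k => DD (ε k) (DD (1, 0) F) q)
    (fun i j => DD (ε i) (DD (ε j) F) q) (fun k i j => DD (ε k) (DD (ε i) (DD (ε j) F)) q)
    (DD (1, 0) F q) (F q - c) (φ q) B _ rfl hB hpos (fun i j => DD_comm hΩ hF hq _ _)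
    (hpde2 q hq) (pde_diff hΩ hF hq _ ε hpde2) (fun m => φ1 m 0) φ2 (fun m => (hlt m).1)
    (fun m => rfl) (fun m => (hlt m).2)
  refine ⟨_, key, ?_⟩
  -- time derivative
  have hT : ∀ H : ℝ × EuclideanSpace ℝ (Fin n) → ℝ, ContDiffOn ℝ ∞ H Ω →
      HasDerivAt (fun r => H (r, y)) (DD (1, 0) H q) s := by
    intro H hH
    have h1 : HasDerivAt (fun r : ℝ => (r, y)) ((1 : ℝ), (0 : EuclideanSpace ℝ (Fin n))) s :=
      (hasDerivAt_id s).prodMk (hasDerivAt_const s y)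
    exact (smooth_diff hΩ hH hq).hasFDerivAt.comp_hasDerivAt s h1
  have hV : HasDerivAt (fun r => 1 + ∑ l, DD (ε l) F (r, y) ^ 2)
      (2 * ∑ l, DD (ε l) F q * DD (ε l) (DD (1, 0) F) q) s := by
    have := (HasDerivAt.fun_sum (u := Finset.univ)
      (fun l _ => (hT _ (s1 l)).fun_pow 2)).const_add 1
    refine this.congr_deriv ?_
    rw [Finset.mul_sum]
    refine Finset.sum_congr rfl fun l _ => ?_
    rw [DD_comm hΩ hF hq]
    simp [hqdef]; ring
  have hφt : HasDerivAt (fun r => φ (r, y)) (-2 * (F q - c) * DD (1, 0) F q - 2 * n) s := by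
    have h2 := ((hT F hF).sub_const c).fun_pow 2
    have h3 := ((hasDerivAt_id s).sub_const t₁).const_mul (2 * (n:ℝ))
    have h4 := ((h2.const_add (dist y x₀ ^ 2)).fun_add h3).const_sub R
    rw [hφ]
    refine h4.congr_deriv ?_
    simp; ring
  refine (hV.fun_mul (hφt.fun_pow 2)).congr_deriv ?_
  simp [hqdef]

lemma core {n : ℕ} (ρ : ℝ) (t₁ t₂ : ℝ)
    (x₀ : EuclideanSpace ℝ (Fin n)) (f : ℝ → EuclideanSpace ℝ (Fin n) → ℝ)
    (hf : IsGMCF (Set.Ico t₁ t₂) (Metric.ball x₀ ρ) f) (c t : ℝ) (htt : t ∈ Set.Ico t₁ t₂)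
    (M : ℝ) (hM : ∀ y ∈ Metric.ball x₀ ρ, Real.sqrt (1 + gradNormSq (f t₁) y) ≤ M)
    (ρ' : ℝ) (hρ' : 0 < ρ') (hρρ : ρ' < ρ) (x : EuclideanSpace ℝ (Fin n))
    (hx : dist x x₀ ^ 2 + (f t x - c) ^ 2 + 2 * n * (t - t₁) < ρ' ^ 2) (δ : ℝ) (hδ : 0 < δ) :
    (1 + gradNormSq (f t) x) *
      (ρ' ^ 2 - (dist x x₀ ^ 2 + (f t x - c) ^ 2 + 2 * n * (t - t₁))) ^ 2 ≤
      M ^ 2 * (ρ' ^ 2) ^ 2 + δ * (t - t₁) := by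
  obtain ⟨hsm, heq⟩ := hf
  set F : ℝ × EuclideanSpace ℝ (Fin n) → ℝ := fun p => f p.1 p.2 with hFdef
  set D : Set (ℝ × EuclideanSpace ℝ (Fin n)) := Set.Ico t₁ t₂ ×ˢ Metric.ball x₀ ρ with hD
  set Ω : Set (ℝ × EuclideanSpace ℝ (Fin n)) := Set.Ioo t₁ t₂ ×ˢ Metric.ball x₀ ρ with hΩdef
  have ht12 : t₁ < t₂ := lt_of_le_of_lt htt.1 htt.2
  have hΩ : IsOpen Ω := isOpen_Ioo.prod isOpen_ball
  have hΩD : Ω ⊆ D := Set.prod_mono Set.Ioo_subset_Ico_self subset_rfl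
  have hF : ContDiffOn ℝ ∞ F Ω := hsm.mono hΩD
  set ε : Fin n → ℝ × EuclideanSpace ℝ (Fin n) := fun i => (0, EuclideanSpace.single i 1) with hε
  -- spatial derivatives on `D`
  have hpdD : ∀ q ∈ D, ∀ i, pd (f q.1) q.2 i = fderivWithin ℝ F D q (ε i) := by
    rintro ⟨s, y⟩ hq i
    have h1 : HasFDerivWithinAt F (fderivWithin ℝ F D (s, y)) D (s, y) :=
      ((hsm _ hq).differentiableWithinAt (by simp)).hasFDerivWithinAt
    have h2 : HasFDerivWithinAt (fun z : EuclideanSpace ℝ (Fin n) => (s, z))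
        (ContinuousLinearMap.inr ℝ ℝ (EuclideanSpace ℝ (Fin n))) (Metric.ball x₀ ρ) y :=
      (hasFDerivAt_prodMk_right s y).hasFDerivWithinAt
    have h3 := (h1.comp y h2 (fun z hz => ⟨hq.1, hz⟩)).hasFDerivAt (isOpen_ball.mem_nhds hq.2)
    have h4 : fderiv ℝ (f s) y = _ := h3.fderiv
    simp only [pd]
    rw [h4]
    simp [hε]
  have huD : UniqueDiffOn ℝ D := (uniqueDiffOn_Ico t₁ t₂).prod isOpen_ball.uniqueDiffOn
  have hpdc : ∀ i, ContinuousOn (fun q : ℝ × EuclideanSpace ℝ (Fin n) => pd (f q.1) q.2 i) D := by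
    intro i
    have := (hsm.continuousOn_fderivWithin huD (by simp)).clm_apply
      (continuousOn_const (c := ε i))
    exact this.congr fun q hq => hpdD q hq i
  have hpdΩ : ∀ q ∈ Ω, ∀ i, pd (f q.1) q.2 i = DD (ε i) F q := by
    intro q hq i
    have hn : D ∈ 𝓝 q := Filter.mem_of_superset (hΩ.mem_nhds hq) hΩD
    rw [hpdD q (hΩD hq) i, fderivWithin_of_mem_nhds hn]
    rfl
  have hgΩ : ∀ q ∈ Ω, gradNormSq (f q.1) q.2 = ∑ l, DD (ε l) F q ^ 2 := by
    intro q hq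
    simp only [gradNormSq, hpdΩ q hq]
  have hpd2 : ∀ q ∈ Ω, ∀ i j, pd2 (f q.1) q.2 i j = DD (ε i) (DD (ε j) F) q := by
    rintro ⟨s, y⟩ hq i j
    have e : (fun z => pd (f s) z j) =ᶠ[𝓝 y] fun z => DD (ε j) F (s, z) := by
      filter_upwards [isOpen_ball.mem_nhds hq.2] with z hz
      exact hpdΩ (s, z) ⟨hq.1, hz⟩ j
    have h1 := (smooth_diff hΩ (DD_smooth hΩ hF (ε j)) hq).hasFDerivAt
    have h3 : HasFDerivAt (fun z => DD (ε j) F (s, z)) _ y :=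
      h1.comp y (hasFDerivAt_prodMk_right s y)
    simp only [pd2]
    rw [e.fderiv_eq, h3.fderiv]
    simp [DD, hε]
  have hpde : ∀ q ∈ Ω, DD (1, 0) F q =
      ∑ i, ∑ j, ((if i = j then (1 : ℝ) else 0) - DD (ε i) F q * DD (ε j) F q /
        (1 + ∑ l, DD (ε l) F q ^ 2)) * DD (ε i) (DD (ε j) F) q := by
    rintro ⟨s, y⟩ hq
    have h := heq s (Set.Ioo_subset_Ico_self hq.1) y hq.2
    have h1 : HasDerivAt (fun r : ℝ => (r, y)) ((1 : ℝ), (0 : EuclideanSpace ℝ (Fin n))) s :=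
      (hasDerivAt_id s).prodMk (hasDerivAt_const s y)
    have h2 := (smooth_diff hΩ hF hq).hasFDerivAt.comp_hasDerivAt s h1
    have h3 : deriv (fun s => f s y) s = DD (1, 0) F (s, y) := h2.deriv
    rw [← h3, h]
    simp only [mcfRHS]
    have a1 := hgΩ _ hq
    have a2 := hpdΩ _ hq
    have a3 := hpd2 _ hq
    simp only at a1 a2 a3
    simp only [a1, a2, a3]
  set φ : ℝ × EuclideanSpace ℝ (Fin n) → ℝ :=
    fun q => ρ' ^ 2 - (dist q.2 x₀ ^ 2 + (F q - c) ^ 2 + 2 * n * (q.1 - t₁)) with hφ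
  have hFc : ContinuousOn F D := hsm.continuousOn
  have hφc : ContinuousOn φ D := by
    rw [hφ]
    fun_prop
  set V : ℝ × EuclideanSpace ℝ (Fin n) → ℝ := fun q => 1 + gradNormSq (f q.1) q.2 with hV
  have hVc : ContinuousOn V D := by
    simp only [hV, gradNormSq]
    exact continuousOn_const.add (continuousOn_finsetSum _ fun i _ => (hpdc i).pow 2)
  set K0 : Set (ℝ × EuclideanSpace ℝ (Fin n)) := Set.Icc t₁ t ×ˢ Metric.closedBall x₀ ρ' with hK0
  have hK0c : IsCompact K0 := isCompact_Icc.prod (isCompact_closedBall x₀ ρ')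
  have hK0D : K0 ⊆ D := by
    rintro ⟨s, y⟩ ⟨⟨h1, h2⟩, h3⟩
    exact ⟨⟨h1, lt_of_le_of_lt h2 htt.2⟩, closedBall_subset_ball hρρ h3⟩
  set K := K0 ∩ φ ⁻¹' Set.Ici 0 with hK
  have hKc : IsCompact K := hK0c.of_isClosed_subset
    ((hφc.mono hK0D).preimage_isClosed_of_isClosed hK0c.isClosed isClosed_Ici)
    Set.inter_subset_left
  have hdist : ∀ s y, t₁ ≤ s → 0 ≤ φ (s, y) → dist y x₀ ≤ ρ' := by
    intro s y hs hp
    simp only [hφ] at hp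
    have h1 : (0:ℝ) ≤ 2 * n * (s - t₁) := mul_nonneg (by positivity) (by linarith)
    exact abs_le_of_sq_le_sq' (by nlinarith [sq_nonneg (F (s, y) - c)]) hρ'.le |>.2
  have hxφ : 0 < φ (t, x) := by simp only [hφ]; linarith
  have hxK : (t, x) ∈ K :=
    ⟨⟨⟨htt.1, le_rfl⟩, hdist t x htt.1 hxφ.le⟩, hxφ.le⟩
  obtain ⟨⟨s, y⟩, hqK, hmax⟩ := hKc.exists_isMaxOn ⟨_, hxK⟩
    (f := fun q => V q * φ q ^ 2 - δ * (q.1 - t₁))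
    (((hVc.mul (hφc.pow 2)).sub (by fun_prop)).mono (Set.inter_subset_left.trans hK0D))
  have hm : ∀ q ∈ K, V q * φ q ^ 2 - δ * (q.1 - t₁) ≤
    V (s, y) * φ (s, y) ^ 2 - δ * (s - t₁) := fun q hq => hmax hq
  have hs1 : t₁ ≤ s := hqK.1.1.1
  have hst : s ≤ t := hqK.1.1.2
  have hyD : (s, y) ∈ D := hK0D hqK.1
  have hφ0 : 0 ≤ φ (s, y) := hqK.2
  suffices hZ : V (s, y) * φ (s, y) ^ 2 - δ * (s - t₁) ≤ M ^ 2 * (ρ' ^ 2) ^ 2 by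
    have := (hm _ hxK).trans hZ
    simp only [hV, hφ, hFdef] at this
    linarith
  have hMR : 0 ≤ M ^ 2 * (ρ' ^ 2) ^ 2 := by positivity
  have hδs : 0 ≤ δ * (s - t₁) := mul_nonneg hδ.le (by linarith)
  rcases hφ0.eq_or_lt with h0 | hpos
  · rw [← h0]; simp; nlinarith
  rcases hs1.eq_or_lt with h1 | hs1'
  · subst h1
    have hMy := hM y hyD.2
    have hg : 0 ≤ gradNormSq (f t₁) y := Finset.sum_nonneg fun i _ => sq_nonneg _
    have hVM : V (t₁, y) ≤ M ^ 2 := (Real.sqrt_le_left (by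
      exact (Real.sqrt_nonneg _).trans hMy)).1 hMy
    have hφR : φ (t₁, y) ≤ ρ' ^ 2 := by
      simp only [hφ]
      nlinarith [sq_nonneg (F (t₁, y) - c), sq_nonneg (dist y x₀)]
    have : V (t₁, y) * φ (t₁, y) ^ 2 ≤ M ^ 2 * (ρ' ^ 2) ^ 2 :=
      mul_le_mul hVM (pow_le_pow_left₀ hφ0 hφR 2) (sq_nonneg _) (sq_nonneg _)
    simpa using this
  -- interior point: contradiction
  exfalso
  have hqΩ : (s, y) ∈ Ω := ⟨⟨hs1', lt_of_le_of_lt hst htt.2⟩, hyD.2⟩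
  have hφat : ContinuousAt φ (s, y) :=
    hφc.continuousAt (Filter.mem_of_superset (hΩ.mem_nhds hqΩ) hΩD)
  have hnear : ∀ᶠ q in 𝓝 (s, y), q ∈ Ω ∧ 0 < φ q :=
    Filter.Eventually.and (hΩ.mem_nhds hqΩ) (hφat.eventually (lt_mem_nhds hpos))
  have hcomp : ∀ q : ℝ × EuclideanSpace ℝ (Fin n), q ∈ Ω → 0 < φ q → q.1 ≤ s → q ∈ K := by
    rintro ⟨s', y'⟩ hq hp hle
    exact ⟨⟨⟨hq.1.1.le, hle.trans hst⟩, hdist s' y' hq.1.1.le hp.le⟩, hp.le⟩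
  have hspace : IsLocalMax (fun z => (1 + ∑ l, DD (ε l) F (s, z) ^ 2) * φ (s, z) ^ 2) y := by
    have hc : ContinuousAt (fun z : EuclideanSpace ℝ (Fin n) => (s, z)) y := by fun_prop
    filter_upwards [hc.eventually hnear] with z hz
    have := hm _ (hcomp _ hz.1 hz.2 le_rfl)
    simp only [hV] at this
    have a1 := hgΩ _ hz.1
    have a2 := hgΩ _ hqΩ
    simp only at a1 a2
    rw [a1, a2] at this
    linarith
  obtain ⟨w, hw, hder⟩ := interior_max hΩ hF ε (fun i => rfl) hpde (ρ' ^ 2) c t₁ x₀ s y hqΩ φ hφ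
    hpos hspace
  have hder2 := hder.fun_sub (((hasDerivAt_id s).sub_const t₁).const_mul δ)
  have hnn := deriv_nonneg_of_left_max _ _ _ hder2 (by
    have hc : ContinuousAt (fun r : ℝ => (r, y)) s := by fun_prop
    filter_upwards [nhdsWithin_le_nhds (hc.eventually hnear), self_mem_nhdsWithin] with r hr hrs
    have := hm _ (hcomp _ hr.1 hr.2 (le_of_lt hrs))
    simp only [hV] at this
    have a1 := hgΩ _ hr.1
    have a2 := hgΩ _ hqΩ
    simp only at a1 a2
    rw [a1, a2] at this
    simpa using this)
  simp at hnn
  linarith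

/-- **Ecker–Huisken local gradient estimate** (graphical form).
For a graphical mean curvature flow on `[t₁,t₂) × Bⁿ(x̂₀,ρ)`, with
`v(t,x) := √(1+|Df(t,x)|²)`, one has for every `c`, every `t ∈ [t₁,t₂)` and every
`x ∈ Bⁿ(x̂₀,ρ)` with `|x−x̂₀|² + (f(t,x)−c)² + 2n(t−t₁) < ρ²` the estimate
`v(t,x)·(1 − ρ⁻²(|x−x̂₀|² + (f(t,x)−c)² + 2n(t−t₁))) ≤ sup_{Bⁿ(x̂₀,ρ)} v(t₁,·)`,
the supremum being expressed via upper bounds `M`. -/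
theorem localgradthm (n : ℕ) (hn : 1 ≤ n) (ρ : ℝ) (hρ : 0 < ρ) (t₁ t₂ : ℝ) (ht : t₁ < t₂)
    (x₀ : EuclideanSpace ℝ (Fin n)) (f : ℝ → EuclideanSpace ℝ (Fin n) → ℝ)
    (hf : IsGMCF (Set.Ico t₁ t₂) (Metric.ball x₀ ρ) f) :
    ∀ c : ℝ, ∀ t ∈ Set.Ico t₁ t₂, ∀ x ∈ Metric.ball x₀ ρ,
      dist x x₀ ^ 2 + (f t x - c) ^ 2 + 2 * n * (t - t₁) < ρ ^ 2 →
      ∀ M : ℝ, (∀ y ∈ Metric.ball x₀ ρ, Real.sqrt (1 + gradNormSq (f t₁) y) ≤ M) →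
        Real.sqrt (1 + gradNormSq (f t) x) *
            (1 - (ρ ^ 2)⁻¹ * (dist x x₀ ^ 2 + (f t x - c) ^ 2 + 2 * n * (t - t₁))) ≤ M := by
  intro c t htt x hx hlt M hM
  set u := dist x x₀ ^ 2 + (f t x - c) ^ 2 + 2 * n * (t - t₁) with hu
  set v := Real.sqrt (1 + gradNormSq (f t) x) with hv
  have hg : 0 ≤ gradNormSq (f t) x := Finset.sum_nonneg fun i _ => sq_nonneg _
  have hv0 : 0 ≤ v := Real.sqrt_nonneg _
  have hv2 : v ^ 2 = 1 + gradNormSq (f t) x := Real.sq_sqrt (by linarith)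
  have hM0 : 0 ≤ M := (Real.sqrt_nonneg _).trans (hM x hx)
  have hstep : ∀ ρ' : ℝ, 0 < ρ' → ρ' < ρ → u < ρ' ^ 2 → v * (ρ' ^ 2 - u) ≤ M * ρ' ^ 2 := by
    intro ρ' h1 h2 h3
    have hc := core ρ t₁ t₂ x₀ f hf c t htt M hM ρ' h1 h2 x h3
    have hT : 0 ≤ t - t₁ := by linarith [htt.1]
    have hsq : (v * (ρ' ^ 2 - u)) ^ 2 ≤ (M * ρ' ^ 2) ^ 2 := by
      refine le_of_forall_pos_le_add fun η hη => ?_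
      have := hc (η / (t - t₁ + 1)) (by positivity)
      have hb : η / (t - t₁ + 1) * (t - t₁) ≤ η := by
        rw [div_mul_eq_mul_div, div_le_iff₀ (by linarith)]
        nlinarith
      rw [mul_pow, mul_pow, hv2]
      linarith
    exact abs_le_of_sq_le_sq' hsq (by positivity) |>.2
  have hlim : v * (ρ ^ 2 - u) ≤ M * ρ ^ 2 := by
    have c1 : Tendsto (fun r : ℝ => v * (r ^ 2 - u)) (𝓝[<] ρ) (𝓝 (v * (ρ ^ 2 - u))) :=
      (Continuous.tendsto (by fun_prop) ρ).mono_left nhdsWithin_le_nhds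
    have c2 : Tendsto (fun r : ℝ => M * r ^ 2) (𝓝[<] ρ) (𝓝 (M * ρ ^ 2)) :=
      (Continuous.tendsto (by fun_prop) ρ).mono_left nhdsWithin_le_nhds
    refine le_of_tendsto_of_tendsto c1 c2 ?_
    have e1 : ∀ᶠ r in 𝓝 ρ, u < r ^ 2 :=
      (Continuous.tendsto (by fun_prop : Continuous fun r : ℝ => r ^ 2) ρ).eventually
        (lt_mem_nhds hlt)
    filter_upwards [nhdsWithin_le_nhds e1, nhdsWithin_le_nhds (lt_mem_nhds hρ),
      self_mem_nhdsWithin] with r h1 h2 h3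
    exact hstep r h2 h3 h1
  have hρ2 : 0 < ρ ^ 2 := by positivity
  have e : v * (1 - (ρ ^ 2)⁻¹ * u) = v * (ρ ^ 2 - u) / ρ ^ 2 := by field_simp
  rw [e, div_le_iff₀ hρ2]
  exact hlim
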